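/- For n >= 1, the number of ascent sequences of length n avoiding the three patterns 0101, 0102, and 0112 equals 2^n - n. -/

import Mathlib

/-- Number of ascents of a sequence (list) of natural numbers. -/
def asc (l : List ℕ) : ℕ :=
  ((List.range (l.length - 1)).filter (fun j => l.getD j 0 < l.getD (j + 1) 0)).length

/-- `x` is an ascent sequence: nonempty, starts with 0, and each later entry is
at most one more than the number of ascents of the preceding prefix. -/
def IsAscSeq (x : List ℕ) : Prop :=
  x ≠ [] ∧ x.getD 0 0 = 0 ∧
    ∀ i, 1 ≤ i → i < x.length → x.getD i 0 ≤ 1 + asc (x.take i)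

/-- `x` contains the pattern `p`: some subsequence of `x` is order-isomorphic
(including equalities) to `p`, i.e. its reduction equals `p`. -/
def Contains (p x : List ℕ) : Prop :=
  ∃ y : List ℕ, y.Sublist x ∧ y.length = p.length ∧
    ∀ i j, i < p.length → j < p.length →
      (y.getD i 0 < y.getD j 0 ↔ p.getD i 0 < p.getD j 0)

/-- `x` avoids the pattern `p`. -/
def Avoids (p x : List ℕ) : Prop := ¬ Contains p x

def decF : ℕ → ℕ → Finset (List ℕ)
  | _, 0 => {[]}
  | 0, r+1 => (decF 0 r).image (List.cons 0)
  | m+1, r+1 => (decF (m+1) r).image (List.cons (m+1)) ∪ decF m (r+1)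

def incF : ℕ → ℕ → Finset (List ℕ)
  | _, 0 => {[]}
  | m, r+1 => (incF (m+1) r).image (List.cons (m+1)) ∪ decF m (r+1)

def zerF : ℕ → Finset (List ℕ)
  | 0 => {[]}
  | r+1 => (zerF r).image (List.cons 0) ∪ (incF 1 r).image (List.cons 1)

theorem mem_decF (m r : ℕ) (l : List ℕ) :
    l ∈ decF m r ↔ l.length = r ∧ (∀ a ∈ l, a ≤ m) ∧ l.Pairwise (fun a b => b ≤ a) := by
  fun_induction decF m r generalizing l with
  | case1 m =>
    simp only [Finset.mem_singleton]
    constructor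
    · rintro rfl; simp
    · rintro ⟨h, -⟩; exact List.length_eq_zero_iff.mp h
  | case2 r ih =>
    simp only [Finset.mem_image, ih]
    constructor
    · rintro ⟨t, ⟨h1, h2, h3⟩, rfl⟩
      simp only [List.length_cons, List.mem_cons, List.pairwise_cons]
      grind
    · rintro ⟨h1, h2, h3⟩
      cases l with
      | nil => simp at h1
      | cons a t =>
        simp only [List.length_cons, List.mem_cons, List.pairwise_cons] at h1 h2 h3
        refine ⟨t, ⟨by omega, by grind, h3.2⟩, ?_⟩
        have := h2 a (Or.inl rfl)
        congr 1; omega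
  | case3 m r ih1 ih2 =>
    simp only [Finset.mem_union, Finset.mem_image, ih1, ih2]
    constructor
    · rintro (⟨t, ⟨h1, h2, h3⟩, rfl⟩ | ⟨h1, h2, h3⟩)
      · simp only [List.length_cons, List.mem_cons, List.pairwise_cons]
        grind
      · exact ⟨h1, fun a ha => (h2 a ha).trans (Nat.le_succ m), h3⟩
    · rintro ⟨h1, h2, h3⟩
      cases l with
      | nil => simp at h1
      | cons a t =>
        simp only [List.length_cons, List.mem_cons, List.pairwise_cons] at h1 h2 h3
        have := h2 a (Or.inl rfl)
        by_cases ha : a = m + 1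
        · left
          exact ⟨t, ⟨by omega, by grind, h3.2⟩, by rw [ha]⟩
        · right
          simp only [List.length_cons, List.mem_cons, List.pairwise_cons]
          refine ⟨h1, ?_, h3⟩
          rintro b (rfl | hb)
          · omega
          · have := h3.1 b hb
            omega

theorem cons_inj' (a : ℕ) : Function.Injective (List.cons a) := List.cons_injective

theorem card_decF (m r : ℕ) : (decF m r).card = (m + r).choose r := by
  fun_induction decF m r with
  | case1 m => simp
  | case2 r ih => rw [Finset.card_image_of_injective _ List.cons_injective, ih]; simp
  | case3 m r ih1 ih2 =>
    rw [Finset.card_union_of_disjoint, Finset.card_image_of_injective _ List.cons_injective,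
      ih1, ih2]
    · rw [show m + 1 + (r + 1) = (m + 1 + r) + 1 by ring, Nat.choose_succ_succ,
        show m + (r + 1) = m + 1 + r by ring]
    · rw [Finset.disjoint_left]
      intro l hl hl'
      rw [mem_decF] at hl'
      simp only [Finset.mem_image] at hl
      obtain ⟨t, -, rfl⟩ := hl
      have := hl'.2.1 (m+1) (by simp)
      omega

theorem card_incF (m r : ℕ) :
    (incF m r).card = ∑ j ∈ Finset.range (r + 1), (m + r).choose j := by
  fun_induction incF m r with
  | case1 m => simp
  | case2 m r ih1 =>
    rw [Finset.card_union_of_disjoint, Finset.card_image_of_injective _ List.cons_injective,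
      ih1, card_decF, Finset.sum_range_succ _ (r+1)]
    · rw [show m + 1 + r = m + (r + 1) by ring]
    · rw [Finset.disjoint_left]
      intro l hl hl'
      rw [mem_decF] at hl'
      simp only [Finset.mem_image] at hl
      obtain ⟨t, -, rfl⟩ := hl
      have := hl'.2.1 (m+1) (by simp)
      omega

theorem card_zerF (r : ℕ) : (zerF r).card + (r + 1) = 2 ^ (r + 1) := by
  induction r with
  | zero => simp [zerF]
  | succ r ih =>
    rw [zerF, Finset.card_union_of_disjoint, Finset.card_image_of_injective _ List.cons_injective,
      Finset.card_image_of_injective _ List.cons_injective, card_incF]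
    · have := Nat.sum_range_choose (r + 1)
      rw [Finset.sum_range_succ] at this
      simp only [Nat.choose_self] at this
      rw [add_comm 1 r, pow_succ]
      omega
    · rw [Finset.disjoint_left]
      intro l hl hl'
      simp only [Finset.mem_image] at hl hl'
      obtain ⟨t, -, rfl⟩ := hl
      obtain ⟨t, -, h⟩ := hl'
      simp at h

/-! ### ascents -/

theorem asc_snoc (p : List ℕ) (a b : ℕ) :
    asc (p ++ [a] ++ [b]) = asc (p ++ [a]) + if a < b then 1 else 0 := by
  unfold asc
  have h1 : (p ++ [a] ++ [b]).length - 1 = p.length + 1 := by simp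
  have h2 : (p ++ [a]).length - 1 = p.length := by simp
  rw [h1, h2, List.range_succ, List.filter_append, List.length_append]
  congr 1
  · congr 1
    apply List.filter_congr
    intro j hj
    rw [List.mem_range] at hj
    rw [List.getD_append (p ++ [a]) _ _ _ (by simp; omega),
      List.getD_append (p ++ [a]) _ _ _ (by simp; omega)]
  · have e1 : (p ++ [a] ++ [b]).getD p.length 0 = a := by simp
    have e2 : (p ++ [a] ++ [b]).getD (p.length + 1) 0 = b := by
      simp
    simp only [List.filter_cons, List.filter_nil, e1, e2]
    by_cases h : a < b <;> simp [h]

theorem asc_le_snoc (p : List ℕ) (hp : p ≠ []) (b : ℕ) : asc p ≤ asc (p ++ [b]) := by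
  obtain ⟨q, a, rfl⟩ := List.eq_nil_or_concat p |>.resolve_left hp
  simp only [List.concat_eq_append]
  rw [asc_snoc]; omega

theorem asc_base (k : ℕ) : asc (List.replicate k 0 ++ [0]) = 0 := by
  induction k with
  | zero => simp [asc]
  | succ k ih =>
    rw [List.replicate_succ', asc_snoc, ih]; simp

theorem asc_p (k m : ℕ) : asc (List.replicate k 0 ++ List.range (m + 1)) = m := by
  induction m with
  | zero => exact asc_base k
  | succ m ih =>
    rw [List.range_succ] at ih
    rw [List.range_succ, List.range_succ, ← List.append_assoc, ← List.append_assoc, asc_snoc,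
      List.append_assoc, ih]
    simp

theorem isAsc_snoc {p : List ℕ} (hp : IsAscSeq p) {a : ℕ} (ha : a ≤ 1 + asc p) :
    IsAscSeq (p ++ [a]) := by
  obtain ⟨h1, h2, h3⟩ := hp
  have hl : 0 < p.length := List.length_pos_iff.mpr h1
  refine ⟨by simp, ?_, ?_⟩
  · rw [List.getD_append _ _ _ _ hl]; exact h2
  · intro i hi hi'
    simp only [List.length_append, List.length_singleton] at hi'
    rw [List.take_append_of_le_length (by omega)]
    by_cases h : i < p.length
    · rw [List.getD_append _ _ _ _ h]; exact h3 i hi h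
    · have : i = p.length := by omega
      subst this
      simpa using ha

theorem isAsc_append (t : List ℕ) : ∀ (p : List ℕ), IsAscSeq p → (∀ a ∈ t, a ≤ 1 + asc p) →
    IsAscSeq (p ++ t) := by
  induction t with
  | nil => intro p hp _; simpa using hp
  | cons a t ih =>
    intro p hp h
    have := ih (p ++ [a]) (isAsc_snoc hp (h a (by simp))) (fun b hb => by
      have := h b (by simp [hb])
      have := asc_le_snoc p hp.1 a
      omega)
    simpa using this

theorem isAsc_bound {p t : List ℕ} {h : ℕ} (hp : p ≠ []) (hx : IsAscSeq (p ++ h :: t)) :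
    h ≤ 1 + asc p := by
  have := hx.2.2 p.length (List.length_pos_iff.mpr hp) (by simp)
  simpa using this

theorem pref_succ (k m : ℕ) (t : List ℕ) :
    List.replicate k 0 ++ List.range (m + 1) ++ (m + 1) :: t =
    List.replicate k 0 ++ List.range (m + 1 + 1) ++ t := by
  rw [List.range_succ (n := m + 1)]; simp

theorem pref_ne (k m : ℕ) : List.replicate k 0 ++ List.range (m + 1) ≠ [] := by
  rw [List.range_succ]; simp

/-! ### backward -/

theorem isAsc_inc (k r : ℕ) : ∀ (m : ℕ) (t : List ℕ), t ∈ incF m r →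
    IsAscSeq (List.replicate k 0 ++ List.range (m + 1)) →
    IsAscSeq (List.replicate k 0 ++ List.range (m + 1) ++ t) := by
  induction r with
  | zero => intro m t ht hp; simp [incF] at ht; subst ht; simpa using hp
  | succ r ih =>
    intro m t ht hp
    simp only [incF, Finset.mem_union, Finset.mem_image, mem_decF] at ht
    rcases ht with ⟨s, hs, rfl⟩ | ⟨-, h2, -⟩
    · rw [pref_succ]
      apply ih _ _ hs
      have := isAsc_snoc hp (a := m + 1) (by rw [asc_p]; omega)
      simpa [List.range_succ (n := m + 1)] using this
    · apply isAsc_append _ _ hp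
      intro a ha
      rw [asc_p]
      have := h2 a ha
      omega

theorem isAsc_zer (r : ℕ) : ∀ (k : ℕ) (t : List ℕ), t ∈ zerF r →
    IsAscSeq (List.replicate k 0 ++ [0]) →
    IsAscSeq (List.replicate k 0 ++ [0] ++ t) := by
  induction r with
  | zero => intro k t ht hp; simp [zerF] at ht; subst ht; simpa using hp
  | succ r ih =>
    intro k t ht hp
    simp only [zerF, Finset.mem_union, Finset.mem_image] at ht
    rcases ht with ⟨s, hs, rfl⟩ | ⟨s, hs, rfl⟩
    · have := ih (k + 1) s hs (by
        rw [List.replicate_succ']; exact isAsc_snoc hp (by omega))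
      rw [List.replicate_succ'] at this
      simpa using this
    · have := isAsc_inc k r 1 s hs (by
        have := isAsc_snoc hp (a := 1) (by omega)
        simpa [List.range_succ] using this)
      simpa [List.range_succ] using this

def Good (x : List ℕ) : Prop :=
  ∀ a b c, [a, b, c].Sublist x → b ≤ a → 1 ≤ a → c ≤ b

theorem pair_inc (r : ℕ) : ∀ (m : ℕ) (t : List ℕ), t ∈ incF m r →
    ∀ b c, [b, c].Sublist t → b ≤ m → c ≤ b := by
  induction r with
  | zero => intro m t ht; simp [incF] at ht; subst ht; simp
  | succ r ih =>
    intro m t ht b c hbc hb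
    simp only [incF, Finset.mem_union, Finset.mem_image, mem_decF] at ht
    rcases ht with ⟨s, hs, rfl⟩ | ⟨-, -, h3⟩
    · rcases List.sublist_cons_iff.mp hbc with h | ⟨q, hq, -⟩
      · exact ih _ _ hs b c h (by omega)
      · simp at hq; omega
    · have := h3.sublist hbc
      simpa using this

theorem good_cons {a : ℕ} {l : List ℕ} (hl : Good l)
    (h : 1 ≤ a → ∀ b c, [b, c].Sublist l → b ≤ a → c ≤ b) : Good (a :: l) := by
  intro u b c hs hb hu
  rcases List.sublist_cons_iff.mp hs with h' | ⟨q, hq, h'⟩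
  · exact hl _ _ _ h' hb hu
  · simp at hq
    obtain ⟨rfl, rfl⟩ := hq
    exact h hu b c h' hb

theorem good_dec {l : List ℕ} (h : l.Pairwise (fun a b => b ≤ a)) : Good l := by
  intro a b c hs _ _
  have := h.sublist hs
  simp at this
  exact this.2

theorem good_inc (r : ℕ) : ∀ (m : ℕ) (t : List ℕ), t ∈ incF m r → Good t := by
  induction r with
  | zero => intro m t ht; simp [incF] at ht; subst ht; intro a b c h; simp at h
  | succ r ih =>
    intro m t ht
    simp only [incF, Finset.mem_union, Finset.mem_image, mem_decF] at ht
    rcases ht with ⟨s, hs, rfl⟩ | ⟨-, -, h3⟩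
    · exact good_cons (ih _ _ hs) (fun _ => pair_inc r _ _ hs)
    · exact good_dec h3

theorem good_zer (r : ℕ) : ∀ (t : List ℕ), t ∈ zerF r → Good t := by
  induction r with
  | zero => intro t ht; simp [zerF] at ht; subst ht; intro a b c h; simp at h
  | succ r ih =>
    intro t ht
    simp only [zerF, Finset.mem_union, Finset.mem_image] at ht
    rcases ht with ⟨s, hs, rfl⟩ | ⟨s, hs, rfl⟩
    · exact good_cons (ih _ hs) (by omega)
    · exact good_cons (good_inc _ _ _ hs) (fun _ => pair_inc r _ _ hs)

theorem len_inc (r : ℕ) : ∀ (m : ℕ) (t : List ℕ), t ∈ incF m r → t.length = r := by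
  induction r with
  | zero => intro m t ht; simp [incF] at ht; subst ht; rfl
  | succ r ih =>
    intro m t ht
    simp only [incF, Finset.mem_union, Finset.mem_image, mem_decF] at ht
    rcases ht with ⟨s, hs, rfl⟩ | ⟨h, -, h3⟩
    · simp [ih _ _ hs]
    · exact h

theorem len_zer (r : ℕ) : ∀ (t : List ℕ), t ∈ zerF r → t.length = r := by
  induction r with
  | zero => intro t ht; simp [zerF] at ht; subst ht; rfl
  | succ r ih =>
    intro t ht
    simp only [zerF, Finset.mem_union, Finset.mem_image] at ht
    rcases ht with ⟨s, hs, rfl⟩ | ⟨s, hs, rfl⟩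
    · simp [ih _ hs]
    · simp [len_inc _ _ _ hs]

theorem contains_four {p q r s : ℕ} {x : List ℕ} (h : Contains [p, q, r, s] x) :
    ∃ a b c d, [a, b, c, d].Sublist x ∧ (a < b ↔ p < q) ∧ (b < c ↔ q < r) ∧ (c < b ↔ r < q) ∧
      (c < d ↔ r < s) := by
  obtain ⟨y, hy, hl, H⟩ := h
  obtain ⟨a, b, c, d, rfl⟩ : ∃ a b c d, y = [a, b, c, d] := by
    match y, hl with
    | [a, b, c, d], _ => exact ⟨a, b, c, d, rfl⟩
  refine ⟨a, b, c, d, hy, ?_, ?_, ?_, ?_⟩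
  · simpa using H 0 1 (by simp) (by simp)
  · simpa using H 1 2 (by simp) (by simp)
  · simpa using H 2 1 (by simp) (by simp)
  · simpa using H 2 3 (by simp) (by simp)

theorem good_avoids {p q r s : ℕ} {x : List ℕ} (h : Good x) (h1 : p < q) (h2 : r ≤ q)
    (h3 : r < s) : Avoids [p, q, r, s] x := by
  intro hc
  obtain ⟨a, b, c, d, hs, e1, e2, e3, e4⟩ := contains_four hc
  have := h b c d ((List.sublist_cons_self a _).trans hs) (by
    by_contra hh
    have := e2.mp (by omega)
    omega) (by have := e1.mpr h1; omega)
  have := e4.mpr h3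
  omega

/-! ### forward -/

theorem c0101 {a b : ℕ} {x : List ℕ} (h : a < b) (hs : [a, b, a, b].Sublist x) :
    Contains [0, 1, 0, 1] x := by
  refine ⟨_, hs, rfl, ?_⟩
  intro i j hi hj
  simp only [List.length_cons, List.length_nil] at hi hj
  interval_cases i <;> interval_cases j <;> simp <;> omega

theorem c0102 {a b c : ℕ} {x : List ℕ} (h : a < b) (h' : b < c) (hs : [a, b, a, c].Sublist x) :
    Contains [0, 1, 0, 2] x := by
  refine ⟨_, hs, rfl, ?_⟩
  intro i j hi hj
  simp only [List.length_cons, List.length_nil] at hi hj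
  interval_cases i <;> interval_cases j <;> simp <;> omega

theorem c0112 {a b c : ℕ} {x : List ℕ} (h : a < b) (h' : b < c) (hs : [a, b, b, c].Sublist x) :
    Contains [0, 1, 1, 2] x := by
  refine ⟨_, hs, rfl, ?_⟩
  intro i j hi hj
  simp only [List.length_cons, List.length_nil] at hi hj
  interval_cases i <;> interval_cases j <;> simp <;> omega

theorem pair_range {a b n : ℕ} (h : a < b) (hb : b < n) : [a, b].Sublist (List.range n) := by
  induction n with
  | zero => omega
  | succ n ih =>
    rw [List.range_succ]
    by_cases hbn : b < n
    · exact (ih hbn).trans (List.sublist_append_left _ _)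
    · have : b = n := by omega
      subst this
      exact List.Sublist.append (l₁ := [a]) (by simpa using h) (List.Sublist.refl _)

theorem pair_app {k m a b c d : ℕ} {t : List ℕ} (h : a < b) (hb : b ≤ m)
    (ht : [c, d].Sublist t) :
    [a, b, c, d].Sublist (List.replicate k 0 ++ List.range (m + 1) ++ t) :=
  List.Sublist.append (l₁ := [a, b])
    ((pair_range h (by omega)).trans (List.sublist_append_right _ _)) ht

theorem fwd_inc (k : ℕ) (t : List ℕ) : ∀ m, 1 ≤ m →
    (∀ x, x = List.replicate k 0 ++ List.range (m + 1) ++ t → IsAscSeq x ∧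
      Avoids [0, 1, 0, 1] x ∧ Avoids [0, 1, 0, 2] x ∧ Avoids [0, 1, 1, 2] x) →
    t ∈ incF m t.length := by
  induction t with
  | nil => intro m _ _; simp [incF]
  | cons h t ih =>
    intro m hm H
    obtain ⟨h1, h2, h3, h4⟩ := H _ rfl
    have hb := isAsc_bound (pref_ne k m) h1
    rw [asc_p] at hb
    simp only [List.length_cons, incF, Finset.mem_union, Finset.mem_image]
    by_cases hh : h = m + 1
    · left
      subst hh
      refine ⟨t, ih (m + 1) (by omega) ?_, rfl⟩
      intro x hx
      rw [← pref_succ] at hx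
      exact H x hx
    · right
      have hle : h ≤ m := by omega
      have key : ∀ c ∈ t, c ≤ h := by
        intro c hc
        by_contra hlt
        have hs : [h, c].Sublist (h :: t) := by simpa using hc
        by_cases hm' : h = m
        · subst hm'
          exact h4 (c0112 (a := 0) (b := h) (c := c) (by omega) (by omega)
            (pair_app (by omega) le_rfl hs))
        · have := pair_app (k := k) (m := m) (a := h) (b := h + 1) (by omega) (by omega) hs
          by_cases hc' : c = h + 1
          · subst hc'
            exact h2 (c0101 (by omega) this)
          · exact h3 (c0102 (by omega) (by omega) this)
      rw [mem_decF]
      refine ⟨by simp, ?_, ?_⟩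
      · intro a ha
        rcases List.mem_cons.mp ha with rfl | ha
        · exact hle
        · exact (key a ha).trans hle
      · rw [List.pairwise_cons]
        refine ⟨key, ?_⟩
        rw [List.pairwise_iff_forall_sublist]
        intro c d hcd
        by_contra hlt
        have hd : d ∈ t := hcd.subset (by simp)
        have := key d hd
        exact h2 (c0101 (a := c) (b := d) (by omega)
          (pair_app (by omega) (by omega) (hcd.trans (List.sublist_cons_self _ _))))

theorem fwd_zer (t : List ℕ) : ∀ k,
    (∀ x, x = List.replicate k 0 ++ [0] ++ t → IsAscSeq x ∧
      Avoids [0, 1, 0, 1] x ∧ Avoids [0, 1, 0, 2] x ∧ Avoids [0, 1, 1, 2] x) →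
    t ∈ zerF t.length := by
  induction t with
  | nil => intro _ _; simp [zerF]
  | cons h t ih =>
    intro k H
    have hb := isAsc_bound (by simp) (H _ rfl).1
    rw [asc_base] at hb
    simp only [List.length_cons, zerF, Finset.mem_union, Finset.mem_image]
    by_cases hh : h = 0
    · subst hh
      left
      refine ⟨t, ih (k + 1) ?_, rfl⟩
      intro x hx
      apply H
      rw [hx, List.replicate_succ']; simp
    · have : h = 1 := by omega
      subst this
      right
      refine ⟨t, fwd_inc k t 1 le_rfl ?_, rfl⟩
      intro x hx
      apply H
      rw [hx]; simp [List.range_succ]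

theorem isAsc_zero : IsAscSeq [0] := by
  refine ⟨by simp, by simp, ?_⟩
  intro i h1 h2
  simp at h2; omega

theorem stmt_12 (n : ℕ) (hn : 1 ≤ n) :
    Nat.card {x : List ℕ // x.length = n ∧ IsAscSeq x ∧ Avoids [0, 1, 0, 1] x ∧ Avoids [0, 1, 0, 2] x ∧ Avoids [0, 1, 1, 2] x} = 2 ^ n - n := by
  obtain ⟨r, rfl⟩ : ∃ r, n = r + 1 := ⟨n - 1, by omega⟩
  have key : ∀ x : List ℕ, (x.length = r + 1 ∧ IsAscSeq x ∧ Avoids [0, 1, 0, 1] x ∧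
      Avoids [0, 1, 0, 2] x ∧ Avoids [0, 1, 1, 2] x) ↔ x ∈ (zerF r).image (List.cons 0) := by
    intro x
    rw [Finset.mem_image]
    constructor
    · rintro ⟨hl, H⟩
      cases x with
      | nil => simp at hl
      | cons a t =>
        have ha : a = 0 := by simpa using H.1.2.1
        subst ha
        have hl' : t.length = r := by simpa using hl
        refine ⟨t, ?_, rfl⟩
        rw [← hl']
        apply fwd_zer t 0
        rintro x rfl
        simpa using H
    · rintro ⟨t, ht, rfl⟩
      have hg : Good (0 :: t) := good_cons (good_zer _ _ ht) (by omega)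
      refine ⟨by simp [len_zer _ _ ht], ?_, good_avoids hg ?_ ?_ ?_, good_avoids hg ?_ ?_ ?_,
        good_avoids hg ?_ ?_ ?_⟩ <;> try omega
      simpa using isAsc_zer r 0 t ht (by simpa using isAsc_zero)
  rw [Nat.card_congr (Equiv.subtypeEquivRight key), Nat.card_eq_fintype_card, Fintype.card_coe,
    Finset.card_image_of_injective _ List.cons_injective]
  have := card_zerF r
  omega
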